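/- There exists a constant M > 0, depending only on A and C₀, such that for every t ≥ 0 one has β² ∫₀ᵗ ‖u(s,·)∂ₓ²u(s,·)‖²_{L²(ℝ)} ds ≤ M ε³. -/

import Mathlib

open MeasureTheory

/-!
For `B = 2A/3`, `C = -A/3` the nonlinear terms drop out of the balance of `‖u‖² + β‖∂ₓu‖²`, which
therefore decreases and controls `βε ∫∫ (∂ₓ²u)²`; together with `√β u² ≤ ‖u‖² + β‖∂ₓu‖²` this
bounds `β² ∫∫ (u ∂ₓ²u)²` by a multiple of `√β / ε`, which suffices when `ε` is bounded below.

For small `ε` consider `(A²/6)‖u‖₄⁴ + ε²‖∂ₓu‖²`. As long as `β (1 + 3A²u²) ≤ ε²`, Young's inequality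
absorbs the nonlinear terms of its balance into the viscous dissipation and leaves
`-(ε³/2)‖∂ₓ²u‖²`. Since `ε u² ≤ ‖u‖² + ε²‖∂ₓu‖²`, that smallness condition holds while the
functional stays below a fixed level, so for `β = O(ε⁴)` and small `ε` a continuity argument
propagates it to all times. Then `u² = O(1/ε)` and `∫∫ (∂ₓ²u)² = O(1/ε³)`, whence
`β² ∫∫ (u ∂ₓ²u)² = O(ε⁴)`.
-/

namespace KudryashovSinelshchikov

section Calculus

theorem lt_of_deriv_right_nonpos_of_lt {f f' : ℝ → ℝ} {a b M : ℝ}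
    (hf : ContinuousOn f (Set.Icc a b))
    (hf' : ∀ s ∈ Set.Ico a b, HasDerivWithinAt f (f' s) (Set.Ici s) s) (ha : f a < M)
    (hM : ∀ s ∈ Set.Ico a b, f s < M → f' s ≤ 0) {t : ℝ} (ht : t ∈ Set.Icc a b) : f t < M := by
  set η := (M - f a) / (b - a + 1)
  have hab : a ≤ b := ht.1.trans ht.2
  have hη : 0 < η := div_pos (by linarith) (by linarith)
  have hηM : η * (b - a + 1) = M - f a := div_mul_cancel₀ _ (by linarith)
  have barrier_lt : ∀ s ∈ Set.Icc a b, f a + η * (s - a) < M := fun s hs => by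
    nlinarith [hs.2]
  have barrier_deriv : ∀ s, HasDerivAt (fun s => f a + η * (s - a)) η s := fun s => by
    simpa using (((hasDerivAt_id s).sub_const a).const_mul η).const_add (f a)
  have le_barrier : f t ≤ f a + η * (t - a) :=
    image_le_of_deriv_right_lt_deriv_boundary hf hf' (by simp) barrier_deriv
      (fun s hs hfs =>
        (hM s hs (hfs ▸ barrier_lt s (Set.Ico_subset_Icc_self hs))).trans_lt hη) ht
  exact le_barrier.trans_lt (barrier_lt t ht)

theorem mul_sq_le_integral_sq_add {f f' : ℝ → ℝ} (hf : ∀ x, HasDerivAt f (f' x) x)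
    (hf2 : MemLp f 2) (hf'2 : MemLp f' 2) (b x : ℝ) :
    b * f x ^ 2 ≤ (∫ y, f y ^ 2) + b ^ 2 * ∫ y, f' y ^ 2 := by
  have hff' : Integrable fun y => 2 * f y * f' y := by
    simpa only [Pi.mul_apply, mul_assoc] using (hf2.integrable_mul hf'2).const_mul 2
  have hsq : ∀ y, HasDerivAt (fun y => f y ^ 2) (2 * f y * f' y) y := fun y => by
    simpa using (hf y).fun_pow 2
  have hlim := tendsto_zero_of_hasDerivAt_of_integrableOn_Iic (a := x) (fun y _ => hsq y)
    hff'.integrableOn hf2.integrable_sq.integrableOn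
  have ftc : ∫ y in Set.Iic x, 2 * f y * f' y = f x ^ 2 := by
    simpa using integral_Iic_of_hasDerivAt_of_tendsto (hsq x).continuousAt.continuousWithinAt
      (fun y _ => hsq y) hff'.integrableOn hlim
  have hsum : Integrable fun y => f y ^ 2 + b ^ 2 * f' y ^ 2 :=
    hf2.integrable_sq.add (hf'2.integrable_sq.const_mul _)
  calc b * f x ^ 2 = ∫ y in Set.Iic x, b * (2 * f y * f' y) := by
        rw [integral_const_mul, ftc]
    _ ≤ ∫ y in Set.Iic x, (f y ^ 2 + b ^ 2 * f' y ^ 2) :=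
        integral_mono (hff'.const_mul b).integrableOn hsum.integrableOn fun y => by
          nlinarith [sq_nonneg (f y - b * f' y)]
    _ ≤ ∫ y, (f y ^ 2 + b ^ 2 * f' y ^ 2) :=
        setIntegral_le_integral hsum (.of_forall fun y => by positivity)
    _ = (∫ y, f y ^ 2) + b ^ 2 * ∫ y, f' y ^ 2 := by
        rw [integral_add hf2.integrable_sq (hf'2.integrable_sq.const_mul _), integral_const_mul]

theorem integral_eq_of_hasDerivAt_sub {E : Type*} [NormedAddCommGroup E] [NormedSpace ℝ E]
    {F f g : ℝ → E} (hF : ∀ x, HasDerivAt F (f x - g x) x) (hFi : Integrable F)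
    (hf : Integrable f) (hg : Integrable g) : ∫ x, f x = ∫ x, g x := by
  rw [← sub_eq_zero, ← integral_sub hf hg]
  exact integral_eq_zero_of_hasDerivAt_of_integrable hF (hf.sub hg) hFi

end Calculus

section ParametricIntegral

variable {X E : Type*} [TopologicalSpace X] [MeasurableSpace X] [OpensMeasurableSpace X]
  [NormedAddCommGroup E] [NormedSpace ℝ E] {μ : Measure X} [IsFiniteMeasureOnCompacts μ]
  {K : Set X} {f f' : ℝ → X → E}

theorem continuous_integral_of_isCompact (hK : IsCompact K) (hf : Continuous (Function.uncurry f))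
    (hfK : ∀ t, ∀ x ∉ K, f t x = 0) : Continuous fun t => ∫ x, f t x ∂μ :=
  continuousOn_univ.1 <| continuousOn_integral_of_compact_support hK hf.continuousOn
    fun t x _ hx => hfK t x hx

theorem hasDerivAt_integral_of_isCompact [T2Space X] (hK : IsCompact K)
    (hf : ∀ t, Continuous (f t)) (hf' : Continuous (Function.uncurry f'))
    (hff' : ∀ t x, HasDerivAt (fun τ => f τ x) (f' t x) t)
    (hfK : ∀ t, ∀ x ∉ K, f t x = 0) (t : ℝ) :
    HasDerivAt (fun τ => ∫ x, f τ x ∂μ) (∫ x, f' t x ∂μ) t := by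
  have hf'K : ∀ s, ∀ x ∉ K, f' s x = 0 := fun s x hx =>
    (hff' s x).unique (by simpa only [hfK _ x hx] using hasDerivAt_const s (0 : E))
  have integrable_slice : ∀ {g : X → E}, Continuous g → (∀ x ∉ K, g x = 0) → Integrable g μ :=
    fun hg hgK => hg.integrable_of_hasCompactSupport (.intro hK hgK)
  obtain ⟨c, hc⟩ := ((isCompact_closedBall t 1).prod hK).exists_bound_of_continuousOn
    hf'.continuousOn
  refine (hasDerivAt_integral_of_dominated_loc_of_deriv_le (bound := K.indicator fun _ => c)
    (Metric.ball_mem_nhds t one_pos)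
    (.of_forall fun s => (integrable_slice (hf s) (hfK s)).aestronglyMeasurable)
    (integrable_slice (hf t) (hfK t))
    (integrable_slice (hf'.uncurry_left t) (hf'K t)).aestronglyMeasurable
    (.of_forall fun x s hs => ?_)
    ((integrableOn_const hK.measure_ne_top).integrable_indicator hK.measurableSet)
    (.of_forall fun x s _ => hff' s x)).2
  by_cases hx : x ∈ K
  · simpa only [Set.indicator_of_mem hx, Function.uncurry_apply_pair] using
      hc (s, x) ⟨Metric.ball_subset_closedBall hs, hx⟩
  · simp only [hf'K s x hx, norm_zero, Set.indicator_of_notMem hx, le_refl]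

end ParametricIntegral

section PartialDerivatives

variable {E : Type*} [NormedAddCommGroup E] [NormedSpace ℝ E] {m n : WithTop ℕ∞} {f : ℝ → ℝ → E}

theorem contDiff_uncurry_deriv_right (hf : ContDiff ℝ n (Function.uncurry f)) (hmn : m + 1 ≤ n) :
    ContDiff ℝ m (Function.uncurry fun t => deriv (f t)) :=
  ContDiff.fderiv_apply (f := fun (p : ℝ × ℝ) x => f p.1 x) (k := fun _ => 1)
    (hf.comp (by fun_prop : ContDiff ℝ n fun q : (ℝ × ℝ) × ℝ => (q.1.1, q.2)))
    contDiff_snd contDiff_const hmn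

theorem contDiff_uncurry_deriv_left (hf : ContDiff ℝ n (Function.uncurry f)) (hmn : m + 1 ≤ n) :
    ContDiff ℝ m (Function.uncurry fun t x => deriv (fun τ => f τ x) t) :=
  ContDiff.fderiv_apply (f := fun (p : ℝ × ℝ) t => f t p.2) (k := fun _ => 1)
    (hf.comp (by fun_prop : ContDiff ℝ n fun q : (ℝ × ℝ) × ℝ => (q.2, q.1.2)))
    contDiff_fst contDiff_const hmn

theorem hasDerivAt_right_of_differentiableAt_uncurry {t x : ℝ}
    (hf : DifferentiableAt ℝ (Function.uncurry f) (t, x)) :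
    HasDerivAt (f t) (fderiv ℝ (Function.uncurry f) (t, x) (0, 1)) x :=
  hf.hasFDerivAt.comp_hasDerivAt (f := fun y => (t, y)) x
    ((hasDerivAt_const x t).prodMk (hasDerivAt_id x))

theorem hasDerivAt_left_of_differentiableAt_uncurry {t x : ℝ}
    (hf : DifferentiableAt ℝ (Function.uncurry f) (t, x)) :
    HasDerivAt (fun τ => f τ x) (fderiv ℝ (Function.uncurry f) (t, x) (1, 0)) t :=
  hf.hasFDerivAt.comp_hasDerivAt (f := fun τ => (τ, x)) t
    ((hasDerivAt_id t).prodMk (hasDerivAt_const t x))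

theorem deriv_deriv_comm (hf : ContDiff ℝ 2 (Function.uncurry f)) (t x : ℝ) :
    deriv (fun τ => deriv (f τ) x) t = deriv (fun y => deriv (fun τ => f τ y) t) x := by
  have hd : Differentiable ℝ (Function.uncurry f) := hf.differentiable two_ne_zero
  have deriv_right : ∀ s y, deriv (f s) y = fderiv ℝ (Function.uncurry f) (s, y) (0, 1) :=
    fun s y => (hasDerivAt_right_of_differentiableAt_uncurry (hd _)).deriv
  have deriv_left : ∀ s y, deriv (fun τ => f τ y) s = fderiv ℝ (Function.uncurry f) (s, y) (1, 0) :=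
    fun s y => (hasDerivAt_left_of_differentiableAt_uncurry (hd _)).deriv
  have hd2 : Differentiable ℝ (fderiv ℝ (Function.uncurry f)) :=
    (hf.fderiv_right le_rfl).differentiable one_ne_zero
  simp only [deriv_right, deriv_left]
  rw [(hasDerivAt_left_of_differentiableAt_uncurry (f := fun s y =>
      fderiv ℝ (Function.uncurry f) (s, y) (0, 1)) ((hd2 _).clm_apply (by fun_prop))).deriv,
    (hasDerivAt_right_of_differentiableAt_uncurry (f := fun s y =>
      fderiv ℝ (Function.uncurry f) (s, y) (1, 0)) ((hd2 _).clm_apply (by fun_prop))).deriv]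
  have second : ∀ v w : ℝ × ℝ, fderiv ℝ (fun p => fderiv ℝ (Function.uncurry f) p v) (t, x) w =
      fderiv ℝ (fderiv ℝ (Function.uncurry f)) (t, x) w v := fun v w => by
    simp [fderiv_clm_apply (hd2 _) (differentiableAt_const v)]
  exact (second _ _).trans <|
    ((hf.contDiffAt.isSymmSndFDerivAt (by simp)).eq _ _).trans (second _ _).symm

end PartialDerivatives

section Equation

/-- The right-hand side of the viscous Kudryashov–Sinelshchikov equation `∂ₜu = ksRHS u`, as an
operator on functions of the space variable. -/
noncomputable def ksRHS (A B C β ε : ℝ) (v : ℝ → ℝ) (x : ℝ) : ℝ :=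
  -(A * v x * deriv v x) - β * deriv (deriv (deriv v)) x
    + B * β * deriv (fun y => v y * deriv (deriv v) y) x
    + C * β * deriv v x * deriv (deriv v) x + ε * deriv (deriv v) x

variable {A B C β ε : ℝ} {v : ℝ → ℝ}

theorem hasDerivAt_deriv (hv : ContDiff ℝ 2 v) (x : ℝ) :
    HasDerivAt (deriv v) (deriv (deriv v) x) x :=
  (hv.deriv' (n := 1)).differentiable_one x |>.hasDerivAt

theorem integrable_jet (hv : ContDiff ℝ 2 v) (hc : HasCompactSupport v) (P : ℝ → ℝ → ℝ → ℝ)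
    (hP : Continuous fun p : ℝ × ℝ × ℝ => P p.1 p.2.1 p.2.2) (h0 : P 0 0 0 = 0) :
    Integrable fun x => P (v x) (deriv v x) (deriv (deriv v) x) := by
  have jet_continuous : Continuous fun x => (v x, deriv v x, deriv (deriv v) x) :=
    hv.continuous.prodMk <| (hv.continuous_deriv one_le_two).prodMk <|
      (hv.deriv' (n := 1)).continuous_deriv le_rfl
  refine (hP.comp jet_continuous).integrable_of_hasCompactSupport <| .intro hc fun x hx => ?_
  simp only [Function.comp_apply, image_eq_zero_of_notMem_tsupport hx, deriv_of_notMem_tsupport hx,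
    deriv_of_notMem_tsupport fun h => hx (tsupport_deriv_subset h), h0]

theorem ksRHS_eq (hv : ContDiff ℝ 3 v) (x : ℝ) :
    ksRHS A B C β ε v x = -(A * v x * deriv v x) - β * deriv (deriv (deriv v)) x
      + B * β * (deriv v x * deriv (deriv v) x + v x * deriv (deriv (deriv v)) x)
      + C * β * deriv v x * deriv (deriv v) x + ε * deriv (deriv v) x := by
  have hv1 : HasDerivAt v (deriv v x) x := (hv.differentiable three_ne_zero x).hasDerivAt
  rw [ksRHS, (hv1.fun_mul (hasDerivAt_deriv (hv.deriv' (n := 2)) x)).deriv]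

theorem continuous_ksRHS (hv : ContDiff ℝ 3 v) : Continuous (ksRHS A B C β ε v) := by
  have h0 : Continuous v := hv.continuous
  have h1 : Continuous (deriv v) := hv.continuous_deriv (by norm_num)
  have h2 : Continuous (deriv (deriv v)) := (hv.deriv' (n := 2)).continuous_deriv one_le_two
  have : Continuous (deriv (deriv (deriv v))) :=
    ((hv.deriv' (n := 2)).deriv' (n := 1)).continuous_deriv le_rfl
  rw [funext (ksRHS_eq hv)]
  fun_prop

theorem integral_pow_mul_ksRHS (hv : ContDiff ℝ 3 v) (hc : HasCompactSupport v) (n : ℕ) :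
    ∫ x, v x ^ (n + 1) * ksRHS A B C β ε v x =
      (n + 1) * β * (∫ x, v x ^ n * deriv v x * deriv (deriv v) x)
        - (n + 1) * ε * (∫ x, v x ^ n * deriv v x ^ 2)
        + (C - (n + 1) * B) * β * ∫ x, v x ^ (n + 1) * deriv v x * deriv (deriv v) x := by
  have hv2 : ContDiff ℝ 2 v := hv.of_le (by norm_num)
  have hi1 : Integrable fun x => v x ^ n * deriv v x * deriv (deriv v) x :=
    integrable_jet hv2 hc (fun p q r => p ^ n * q * r) (by fun_prop) (by simp)
  have hi2 : Integrable fun x => v x ^ n * deriv v x ^ 2 :=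
    integrable_jet hv2 hc (fun p q _ => p ^ n * q ^ 2) (by fun_prop) (by simp)
  have hi3 : Integrable fun x => v x ^ (n + 1) * deriv v x * deriv (deriv v) x :=
    integrable_jet hv2 hc (fun p q r => p ^ (n + 1) * q * r) (by fun_prop) (by simp)
  have flux_integrable : Integrable fun x => -A / (n + 3) * v x ^ (n + 3)
      - β * (v x ^ (n + 1) * deriv (deriv v) x) + B * β * (v x ^ (n + 2) * deriv (deriv v) x)
      + ε * (v x ^ (n + 1) * deriv v x) :=
    integrable_jet hv2 hc (fun p q r => -A / (n + 3) * p ^ (n + 3) - β * (p ^ (n + 1) * r)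
      + B * β * (p ^ (n + 2) * r) + ε * (p ^ (n + 1) * q)) (by fun_prop) (by simp)
  have hiK : Integrable fun x => v x ^ (n + 1) * ksRHS A B C β ε v x :=
    ((hv.continuous.pow _).mul (continuous_ksRHS hv)).integrable_of_hasCompactSupport
      (hc.comp_left (g := (· ^ (n + 1))) (by simp)).mul_right
  simp_rw [← integral_const_mul]
  rw [← integral_sub (by fun_prop) (by fun_prop), ← integral_add (by fun_prop) (by fun_prop)]
  refine integral_eq_of_hasDerivAt_sub (fun x => ?_) flux_integrable hiK (by fun_prop)
  have hd0 : HasDerivAt v (deriv v x) x := (hv.differentiable three_ne_zero x).hasDerivAt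
  have hd1 := hasDerivAt_deriv hv2 x
  have hd2 := hasDerivAt_deriv (hv.deriv' (n := 2)) x
  refine (((((hd0.fun_pow (n + 3)).const_mul _).fun_sub
    (((hd0.fun_pow (n + 1)).fun_mul hd2).const_mul _)).fun_add
    (((hd0.fun_pow (n + 2)).fun_mul hd2).const_mul _)).fun_add
    (((hd0.fun_pow (n + 1)).fun_mul hd1).const_mul _)).congr_deriv ?_
  rw [ksRHS_eq hv]
  simp only [Nat.add_sub_cancel, Nat.add_succ_sub_one]
  push_cast
  field_simp
  ring

theorem integral_deriv_deriv_mul_ksRHS (hv : ContDiff ℝ 3 v) (hc : HasCompactSupport v) :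
    ∫ x, deriv (deriv v) x * ksRHS A B C β ε v x =
      -A * (∫ x, v x * deriv v x * deriv (deriv v) x)
        + (B / 2 + C) * β * (∫ x, deriv v x * deriv (deriv v) x ^ 2)
        + ε * ∫ x, deriv (deriv v) x ^ 2 := by
  have hv2 : ContDiff ℝ 2 v := hv.of_le (by norm_num)
  have hi1 : Integrable fun x => v x * deriv v x * deriv (deriv v) x :=
    integrable_jet hv2 hc (fun p q r => p * q * r) (by fun_prop) (by simp)
  have hi2 : Integrable fun x => deriv v x * deriv (deriv v) x ^ 2 :=
    integrable_jet hv2 hc (fun _ q r => q * r ^ 2) (by fun_prop) (by simp)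
  have hi3 : Integrable fun x => deriv (deriv v) x ^ 2 :=
    integrable_jet hv2 hc (fun _ _ r => r ^ 2) (by fun_prop) (by simp)
  have flux_integrable : Integrable fun x =>
      -β / 2 * deriv (deriv v) x ^ 2 + B * β / 2 * (v x * deriv (deriv v) x ^ 2) :=
    integrable_jet hv2 hc (fun p _ r => -β / 2 * r ^ 2 + B * β / 2 * (p * r ^ 2))
      (by fun_prop) (by simp)
  have hiK : Integrable fun x => deriv (deriv v) x * ksRHS A B C β ε v x :=
    (((hv.deriv' (n := 2)).continuous_deriv one_le_two).mul
      (continuous_ksRHS hv)).integrable_of_hasCompactSupport hc.deriv.deriv.mul_right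
  simp_rw [← integral_const_mul]
  rw [← integral_add (by fun_prop) (by fun_prop), ← integral_add (by fun_prop) (by fun_prop)]
  refine integral_eq_of_hasDerivAt_sub (fun x => ?_) flux_integrable hiK (by fun_prop)
  have hd0 : HasDerivAt v (deriv v x) x := (hv.differentiable three_ne_zero x).hasDerivAt
  have hd2 := hasDerivAt_deriv (hv.deriv' (n := 2)) x
  refine (((hd2.fun_pow 2).const_mul _).fun_add
    ((hd0.fun_mul (hd2.fun_pow 2)).const_mul _)).congr_deriv ?_
  rw [ksRHS_eq hv]
  ring

theorem integral_deriv_mul_deriv_deriv (hv : ContDiff ℝ 2 v) (hc : HasCompactSupport v) :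
    ∫ x, deriv v x * deriv (deriv v) x = 0 := by
  have hi : Integrable fun x => deriv v x * deriv (deriv v) x :=
    integrable_jet hv hc (fun _ q r => q * r) (by fun_prop) (by simp)
  have hi1 : Integrable fun x => deriv v x ^ 2 / 2 :=
    integrable_jet hv hc (fun _ q _ => q ^ 2 / 2) (by fun_prop) (by simp)
  exact integral_eq_zero_of_hasDerivAt_of_integrable (fun x =>
    (((hasDerivAt_deriv hv x).fun_pow 2).div_const 2).congr_deriv (by ring)) hi hi1

end Equation

section Evolution

variable {u : ℝ → ℝ → ℝ} {K : Set ℝ}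

theorem deriv_eq_zero_of_notMem {f : ℝ → ℝ} (hK : IsClosed K) (hf : ∀ x ∉ K, f x = 0) :
    ∀ x ∉ K, deriv f x = 0 := fun _ hx =>
  deriv_of_notMem_tsupport fun h => hx <|
    closure_minimal (Function.support_subset_iff'.2 hf) hK h

theorem continuous_integral_jet (hu : ContDiff ℝ 2 (Function.uncurry u)) (hK : IsCompact K)
    (huK : ∀ t, ∀ x ∉ K, u t x = 0) (P : ℝ → ℝ → ℝ → ℝ)
    (hP : Continuous fun p : ℝ × ℝ × ℝ => P p.1 p.2.1 p.2.2) (h0 : P 0 0 0 = 0) :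
    Continuous fun t => ∫ x, P (u t x) (deriv (u t) x) (deriv (deriv (u t)) x) := by
  have hux : ContDiff ℝ 1 (Function.uncurry fun t => deriv (u t)) :=
    contDiff_uncurry_deriv_right hu le_rfl
  have huxx := (contDiff_uncurry_deriv_right (m := 0) hux le_rfl).continuous
  have huxK := fun t => deriv_eq_zero_of_notMem hK.isClosed (huK t)
  have huxxK := fun t => deriv_eq_zero_of_notMem hK.isClosed (huxK t)
  exact continuous_integral_of_isCompact hK
    (f := fun t x => P (u t x) (deriv (u t) x) (deriv (deriv (u t)) x))
    (hP.comp (hu.continuous.prodMk (hux.continuous.prodMk huxx)))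
    fun t x hx => by rw [huK t x hx, huxK t x hx, huxxK t x hx, h0]

theorem hasDerivAt_integral_pow (hu : ContDiff ℝ 1 (Function.uncurry u)) (hK : IsCompact K)
    (huK : ∀ t, ∀ x ∉ K, u t x = 0) (n : ℕ) (t : ℝ) :
    HasDerivAt (fun τ => ∫ x, u τ x ^ (n + 1))
      ((n + 1) * ∫ x, u t x ^ n * deriv (fun τ => u τ x) t) t := by
  have integrand_continuous : Continuous (Function.uncurry fun s x =>
      (n + 1) * u s x ^ n * deriv (fun τ => u τ x) s) :=
    (continuous_const.mul (hu.continuous.pow n)).mul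
      (contDiff_uncurry_deriv_left (m := 0) hu le_rfl).continuous
  simp_rw [← integral_const_mul, ← mul_assoc]
  refine hasDerivAt_integral_of_isCompact hK (fun s => (hu.continuous.uncurry_left s).pow (n + 1))
    integrand_continuous (fun s x => ?_) (fun s x hx => by simp [huK s x hx]) t
  simpa using (hasDerivAt_left_of_differentiableAt_uncurry
    (hu.differentiable_one (s, x))).differentiableAt.hasDerivAt.fun_pow (n + 1)

theorem hasDerivAt_integral_deriv_sq (hu : ContDiff ℝ 2 (Function.uncurry u)) (hK : IsCompact K)
    (huK : ∀ t, ∀ x ∉ K, u t x = 0) (t : ℝ) :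
    HasDerivAt (fun τ => ∫ x, deriv (u τ) x ^ 2)
      (-2 * ∫ x, deriv (deriv (u t)) x * deriv (fun τ => u τ x) t) t := by
  have hux : ContDiff ℝ 1 (Function.uncurry fun t => deriv (u t)) :=
    contDiff_uncurry_deriv_right hu le_rfl
  have hut : ContDiff ℝ 1 (Function.uncurry fun t x => deriv (fun τ => u τ x) t) :=
    contDiff_uncurry_deriv_left hu le_rfl
  have huxK : ∀ t, ∀ x ∉ K, deriv (u t) x = 0 := fun s =>
    deriv_eq_zero_of_notMem hK.isClosed (huK s)
  have hc : HasCompactSupport (deriv (u t)) := .intro hK (huxK t)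
  have hut_diff : Differentiable ℝ fun x => deriv (fun τ => u τ x) t := fun x =>
    (hasDerivAt_right_of_differentiableAt_uncurry (hut.differentiable_one (t, x))).differentiableAt
  have hux_diff : Differentiable ℝ (deriv (u t)) := fun x =>
    (hasDerivAt_right_of_differentiableAt_uncurry (hux.differentiable_one (t, x))).differentiableAt
  have hutx := (contDiff_uncurry_deriv_right (m := 0) hut le_rfl).continuous.uncurry_left t
  have huxx := (contDiff_uncurry_deriv_right (m := 0) hux le_rfl).continuous.uncurry_left t
  have by_parts : ∫ x, deriv (u t) x * deriv (fun y => deriv (fun τ => u τ y) t) x =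
      -∫ x, deriv (deriv (u t)) x * deriv (fun τ => u τ x) t :=
    integral_mul_deriv_eq_deriv_mul_of_integrable (fun x _ => (hux_diff x).hasDerivAt)
      (fun x _ => (hut_diff x).hasDerivAt)
      ((hux_diff.continuous.mul hutx).integrable_of_hasCompactSupport hc.mul_right)
      ((huxx.mul hut_diff.continuous).integrable_of_hasCompactSupport hc.deriv.mul_right)
      ((hux_diff.continuous.mul hut_diff.continuous).integrable_of_hasCompactSupport hc.mul_right)
  refine (hasDerivAt_integral_pow hux hK huxK 1 t).congr_deriv ?_
  simp only [pow_one, deriv_deriv_comm hu, by_parts]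
  push_cast
  ring

end Evolution

section Energies

variable {A B C β ε : ℝ} {v : ℝ → ℝ}

/-- The energy `‖v‖² + β‖v'‖²`; along the flow it decreases for the energy-preserving choice of
`B` and `C`. -/
noncomputable def energy (β : ℝ) (v : ℝ → ℝ) : ℝ :=
  (∫ x, v x ^ 2) + β * ∫ x, deriv v x ^ 2

/-- The functional `(A²/6)‖v‖₄⁴ + ε²‖v'‖²`; its viscous dissipation controls `ε³‖v''‖²` as long as
`β‖v‖_∞²` is small compared with `ε²`. -/
noncomputable def quarticEnergy (A ε : ℝ) (v : ℝ → ℝ) : ℝ :=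
  A ^ 2 / 6 * (∫ x, v x ^ 4) + ε ^ 2 * ∫ x, deriv v x ^ 2

theorem energy_nonneg (hβ : 0 ≤ β) : 0 ≤ energy β v := by
  unfold energy
  positivity

theorem quarticEnergy_nonneg : 0 ≤ quarticEnergy A ε v := by
  unfold quarticEnergy
  positivity

theorem energy_le_integral_sq_add :
    energy β v ≤ (∫ x, v x ^ 2) + (∫ x, v x ^ 4) + (β + ε ^ 2) * ∫ x, deriv v x ^ 2 := by
  have quartic_nonneg : 0 ≤ ∫ x, v x ^ 4 := by positivity
  have gradient_nonneg : 0 ≤ ε ^ 2 * ∫ x, deriv v x ^ 2 := by positivity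
  unfold energy
  linarith

theorem quarticEnergy_le_mul_integral_sq_add (hβ : 0 ≤ β) :
    quarticEnergy A ε v ≤ (A ^ 2 / 6 + 1) *
      ((∫ x, v x ^ 2) + (∫ x, v x ^ 4) + (β + ε ^ 2) * ∫ x, deriv v x ^ 2) := by
  have square_nonneg : 0 ≤ ∫ x, v x ^ 2 := by positivity
  have quartic_nonneg : 0 ≤ ∫ x, v x ^ 4 := by positivity
  have gradient_nonneg : 0 ≤ ∫ x, deriv v x ^ 2 := by positivity
  have quartic_le : ∫ x, v x ^ 4 ≤
      (∫ x, v x ^ 2) + (∫ x, v x ^ 4) + (β + ε ^ 2) * ∫ x, deriv v x ^ 2 := by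
    nlinarith
  have gradient_le : ε ^ 2 * ∫ x, deriv v x ^ 2 ≤
      (∫ x, v x ^ 2) + (∫ x, v x ^ 4) + (β + ε ^ 2) * ∫ x, deriv v x ^ 2 := by
    nlinarith
  unfold quarticEnergy
  linarith [mul_le_mul_of_nonneg_left quartic_le (by positivity : 0 ≤ A ^ 2 / 6)]

theorem mul_sq_le_energy (hv : ContDiff ℝ 1 v) (hc : HasCompactSupport v) (b x : ℝ) :
    b * v x ^ 2 ≤ energy (b ^ 2) v :=
  mul_sq_le_integral_sq_add (fun y => (hv.differentiable_one y).hasDerivAt)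
    (hv.continuous.memLp_of_hasCompactSupport hc)
    ((hv.continuous_deriv le_rfl).memLp_of_hasCompactSupport hc.deriv) b x

theorem mul_sq_le_energy_add_quarticEnergy (hβ : 0 ≤ β) (hv : ContDiff ℝ 1 v)
    (hc : HasCompactSupport v) (x : ℝ) :
    ε * v x ^ 2 ≤ energy β v + quarticEnergy A ε v := by
  have sup_bound := mul_sq_le_energy hv hc ε x
  have hβv : 0 ≤ β * ∫ x, deriv v x ^ 2 := by positivity
  have hAv : 0 ≤ A ^ 2 / 6 * ∫ x, v x ^ 4 := by positivity
  unfold energy at *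
  unfold quarticEnergy
  linarith

-- The two indefinite terms vanish simultaneously exactly for `B = 2A/3`, `C = -A/3` (if `β ≠ 0`).
theorem energy_variation (hv : ContDiff ℝ 3 v) (hc : HasCompactSupport v) :
    2 * (∫ x, v x * ksRHS A B C β ε v x)
        + β * (-2 * ∫ x, deriv (deriv v) x * ksRHS A B C β ε v x) =
      2 * β * (A + C - B) * (∫ x, v x * deriv v x * deriv (deriv v) x)
        - β ^ 2 * (B + 2 * C) * (∫ x, deriv v x * deriv (deriv v) x ^ 2)
        - 2 * ε * energy β (deriv v) := by
  have zeroth := integral_pow_mul_ksRHS (A := A) (B := B) (C := C) (β := β) (ε := ε) hv hc 0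
  simp only [zero_add, pow_one, pow_zero, one_mul, Nat.cast_zero,
    integral_deriv_mul_deriv_deriv (hv.of_le (by norm_num)) hc] at zeroth
  rw [zeroth, integral_deriv_deriv_mul_ksRHS hv hc, energy]
  ring

theorem quartic_dissipation_integrand_le {p q r : ℝ} (hβ : 0 ≤ β) (hε : 0 < ε)
    (hp : β * (1 + 3 * A ^ 2 * p ^ 2) ≤ ε ^ 2) :
    (2 * A ^ 2 * β * p - 14 / 9 * A ^ 3 * β * p ^ 2 + 2 * A * ε ^ 2) * (p * q * r)
      - 2 * A ^ 2 * ε * (p ^ 2 * q ^ 2) - 2 * ε ^ 3 * r ^ 2 ≤ -(ε ^ 3 / 2) * r ^ 2 := by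
  obtain ⟨m, hm⟩ : ∃ m, m = 2 * β * (A * p) - 14 / 9 * β * (A * p) ^ 2 + 2 * ε ^ 2 := ⟨_, rfl⟩
  have hAp : 0 ≤ β * (A * p) ^ 2 := by positivity
  have m_le : m ≤ 3 * ε ^ 2 := by nlinarith [mul_nonneg hβ (sq_nonneg (A * p - 1)), hm]
  have neg_le_m : -(3 * ε ^ 2) ≤ m := by nlinarith [mul_nonneg hβ (sq_nonneg (A * p + 1)), hm]
  have m_sq_le : m ^ 2 ≤ (3 * ε ^ 2) ^ 2 := sq_le_sq.2 (abs_le_abs m_le (by linarith))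
  -- The quadratic form in `(A p q, r)` is definite because `m² ≤ 9 ε⁴ < 12 ε⁴`.
  have discriminant : 0 ≤ 8 * ε * (2 * ε * (A * p * q) ^ 2 + 3 / 2 * ε ^ 3 * r ^ 2
      - m * (A * p * q) * r) := by
    nlinarith [sq_nonneg (4 * ε * (A * p * q) - m * r),
      mul_le_mul_of_nonneg_right m_sq_le (sq_nonneg r), mul_nonneg (pow_nonneg hε.le 4)
      (sq_nonneg r)]
  have := nonneg_of_mul_nonneg_right discriminant (by positivity)
  subst hm
  linarith

theorem quarticEnergy_variation_le (hβ : 0 ≤ β) (hε : 0 < ε) (hv : ContDiff ℝ 3 v)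
    (hc : HasCompactSupport v) (hsup : ∀ x, β * (1 + 3 * A ^ 2 * v x ^ 2) ≤ ε ^ 2) :
    A ^ 2 / 6 * (4 * ∫ x, v x ^ 3 * ksRHS A (2 * A / 3) (-(A / 3)) β ε v x)
        + ε ^ 2 * (-2 * ∫ x, deriv (deriv v) x * ksRHS A (2 * A / 3) (-(A / 3)) β ε v x) ≤
      -(ε ^ 3 / 2) * ∫ x, deriv (deriv v) x ^ 2 := by
  have hv2 : ContDiff ℝ 2 v := hv.of_le (by norm_num)
  have hi1 : Integrable fun x => v x * deriv v x * deriv (deriv v) x :=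
    integrable_jet hv2 hc (fun p q r => p * q * r) (by fun_prop) (by simp)
  have hi2 : Integrable fun x => v x ^ 2 * deriv v x * deriv (deriv v) x :=
    integrable_jet hv2 hc (fun p q r => p ^ 2 * q * r) (by fun_prop) (by simp)
  have hi3 : Integrable fun x => v x ^ 3 * deriv v x * deriv (deriv v) x :=
    integrable_jet hv2 hc (fun p q r => p ^ 3 * q * r) (by fun_prop) (by simp)
  have hi4 : Integrable fun x => v x ^ 2 * deriv v x ^ 2 :=
    integrable_jet hv2 hc (fun p q _ => p ^ 2 * q ^ 2) (by fun_prop) (by simp)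
  have hi5 : Integrable fun x => deriv (deriv v) x ^ 2 :=
    integrable_jet hv2 hc (fun _ _ r => r ^ 2) (by fun_prop) (by simp)
  have cubic := integral_pow_mul_ksRHS (A := A) (B := 2 * A / 3) (C := -(A / 3)) (β := β) (ε := ε)
    hv hc 2
  simp only [Nat.cast_ofNat, Nat.reduceAdd] at cubic
  calc _ = 2 * A ^ 2 * β * (∫ x, v x ^ 2 * deriv v x * deriv (deriv v) x)
        + -(14 / 9 * A ^ 3 * β) * (∫ x, v x ^ 3 * deriv v x * deriv (deriv v) x)
        + 2 * A * ε ^ 2 * (∫ x, v x * deriv v x * deriv (deriv v) x)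
        + -(2 * A ^ 2 * ε) * (∫ x, v x ^ 2 * deriv v x ^ 2)
        + -(2 * ε ^ 3) * (∫ x, deriv (deriv v) x ^ 2) := by
        rw [cubic, integral_deriv_deriv_mul_ksRHS hv hc]
        ring
    _ ≤ -(ε ^ 3 / 2) * ∫ x, deriv (deriv v) x ^ 2 := by
        simp_rw [← integral_const_mul]
        repeat rw [← integral_add (by fun_prop) (by fun_prop)]
        refine integral_mono (by fun_prop) (by fun_prop) fun x => le_of_eq_of_le ?_ <|
          quartic_dissipation_integrand_le (q := deriv v x) hβ hε (hsup x)
        ring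

end Energies

section Solutions

/-- `u` is a classical solution, for times `t ≥ 0`, of the viscous Kudryashov–Sinelshchikov
equation, all of whose time slices vanish outside a common compact set. -/
structure IsSolution (A B C β ε : ℝ) (u : ℝ → ℝ → ℝ) : Prop where
  contDiff : ContDiff ℝ 3 (Function.uncurry u)
  vanishes : ∃ K, IsCompact K ∧ ∀ t, ∀ x ∉ K, u t x = 0
  evolution : ∀ t, 0 ≤ t → ∀ x, deriv (fun τ => u τ x) t = ksRHS A B C β ε (u t) x

namespace IsSolution

variable {A B C β ε t : ℝ} {u : ℝ → ℝ → ℝ}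

theorem hasCompactSupport (h : IsSolution A B C β ε u) (t : ℝ) : HasCompactSupport (u t) := by
  obtain ⟨K, hK, huK⟩ := h.vanishes
  exact .intro hK (huK t)

theorem contDiff_slice (h : IsSolution A B C β ε u) (t : ℝ) : ContDiff ℝ 3 (u t) :=
  h.contDiff.comp (contDiff_prodMk_right t)

theorem continuous_integral_jet (h : IsSolution A B C β ε u) (P : ℝ → ℝ → ℝ → ℝ)
    (hP : Continuous fun p : ℝ × ℝ × ℝ => P p.1 p.2.1 p.2.2) (h0 : P 0 0 0 = 0) :
    Continuous fun t => ∫ x, P (u t x) (deriv (u t) x) (deriv (deriv (u t)) x) := by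
  obtain ⟨K, hK, huK⟩ := h.vanishes
  exact KudryashovSinelshchikov.continuous_integral_jet (h.contDiff.of_le (by norm_num)) hK huK
    P hP h0

theorem continuous_energy_deriv (h : IsSolution A B C β ε u) :
    Continuous fun t => energy β (deriv (u t)) :=
  (h.continuous_integral_jet (fun _ q _ => q ^ 2) (by fun_prop) (by simp)).add <|
    continuous_const.mul <|
      h.continuous_integral_jet (fun _ _ r => r ^ 2) (by fun_prop) (by simp)

theorem continuous_integral_deriv_deriv_sq (h : IsSolution A B C β ε u) :
    Continuous fun t => ∫ x, deriv (deriv (u t)) x ^ 2 :=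
  h.continuous_integral_jet (fun _ _ r => r ^ 2) (by fun_prop) (by simp)

theorem hasDerivAt_integral_pow (h : IsSolution A B C β ε u) (ht : 0 ≤ t) (n : ℕ) :
    HasDerivAt (fun τ => ∫ x, u τ x ^ (n + 1))
      ((n + 1) * ∫ x, u t x ^ n * ksRHS A B C β ε (u t) x) t := by
  obtain ⟨K, hK, huK⟩ := h.vanishes
  simpa only [h.evolution t ht] using KudryashovSinelshchikov.hasDerivAt_integral_pow
    (h.contDiff.of_le (by norm_num)) hK huK n t

theorem hasDerivAt_integral_deriv_sq (h : IsSolution A B C β ε u) (ht : 0 ≤ t) :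
    HasDerivAt (fun τ => ∫ x, deriv (u τ) x ^ 2)
      (-2 * ∫ x, deriv (deriv (u t)) x * ksRHS A B C β ε (u t) x) t := by
  obtain ⟨K, hK, huK⟩ := h.vanishes
  simpa only [h.evolution t ht] using KudryashovSinelshchikov.hasDerivAt_integral_deriv_sq
    (h.contDiff.of_le (by norm_num)) hK huK t

theorem hasDerivAt_energy (h : IsSolution A B C β ε u) (ht : 0 ≤ t) :
    HasDerivAt (fun τ => energy β (u τ))
      (2 * β * (A + C - B) * (∫ x, u t x * deriv (u t) x * deriv (deriv (u t)) x)
        - β ^ 2 * (B + 2 * C) * (∫ x, deriv (u t) x * deriv (deriv (u t)) x ^ 2)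
        - 2 * ε * energy β (deriv (u t))) t := by
  rw [← energy_variation (h.contDiff_slice t) (h.hasCompactSupport t)]
  refine ((h.hasDerivAt_integral_pow ht 1).fun_add
    ((h.hasDerivAt_integral_deriv_sq ht).const_mul β)).congr_deriv ?_
  norm_num

theorem hasDerivAt_quarticEnergy (h : IsSolution A B C β ε u) (ht : 0 ≤ t) :
    HasDerivAt (fun τ => quarticEnergy A ε (u τ))
      (A ^ 2 / 6 * (4 * ∫ x, u t x ^ 3 * ksRHS A B C β ε (u t) x)
        + ε ^ 2 * (-2 * ∫ x, deriv (deriv (u t)) x * ksRHS A B C β ε (u t) x)) t := by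
  refine (((h.hasDerivAt_integral_pow ht 3).const_mul _).fun_add
    ((h.hasDerivAt_integral_deriv_sq ht).const_mul _)).congr_deriv ?_
  norm_num

theorem integral_sq_mul_deriv_deriv_le (h : IsSolution A B C β ε u) (ht : 0 ≤ t) {T : ℝ}
    (hT : ∀ s ∈ Set.Icc 0 t, ∀ x, u s x ^ 2 ≤ T) :
    ∫ s in (0 : ℝ)..t, ∫ x, (u s x * deriv (deriv (u s)) x) ^ 2 ≤
      T * ∫ s in (0 : ℝ)..t, ∫ x, deriv (deriv (u s)) x ^ 2 := by
  have continuous_lhs := h.continuous_integral_jet (fun p _ r => (p * r) ^ 2) (by fun_prop)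
    (by simp)
  rw [← intervalIntegral.integral_const_mul]
  refine intervalIntegral.integral_mono_on ht (continuous_lhs.intervalIntegrable _ _)
    ((h.continuous_integral_deriv_deriv_sq.const_mul T).intervalIntegrable _ _) fun s hs => ?_
  have hv2 : ContDiff ℝ 2 (u s) := (h.contDiff_slice s).of_le (by norm_num)
  rw [← integral_const_mul]
  refine integral_mono
    (integrable_jet hv2 (h.hasCompactSupport s) (fun p _ r => (p * r) ^ 2) (by fun_prop) (by simp))
    (integrable_jet hv2 (h.hasCompactSupport s) (fun _ _ r => T * r ^ 2) (by fun_prop) (by simp))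
    fun x => ?_
  simpa only [mul_pow] using mul_le_mul_of_nonneg_right (hT s hs x) (sq_nonneg _)

theorem energy_add_integral_energy_deriv (h : IsSolution A (2 * A / 3) (-(A / 3)) β ε u)
    (ht : 0 ≤ t) :
    energy β (u t) + 2 * ε * ∫ s in (0 : ℝ)..t, energy β (deriv (u s)) = energy β (u 0) := by
  have ftc := intervalIntegral.integral_eq_sub_of_hasDerivAt_of_le ht
    (fun s hs => (h.hasDerivAt_energy hs.1).continuousAt.continuousWithinAt)
    (f' := fun s => -(2 * ε) * energy β (deriv (u s)))
    (fun s hs => (h.hasDerivAt_energy hs.1.le).congr_deriv (by ring))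
    ((h.continuous_energy_deriv.const_mul _).intervalIntegrable _ _)
  rw [intervalIntegral.integral_const_mul] at ftc
  linarith

theorem energy_le (h : IsSolution A (2 * A / 3) (-(A / 3)) β ε u) (hβ : 0 ≤ β) (hε : 0 ≤ ε)
    (ht : 0 ≤ t) : energy β (u t) ≤ energy β (u 0) := by
  have dissipation_nonneg : 0 ≤ ∫ s in (0 : ℝ)..t, energy β (deriv (u s)) :=
    intervalIntegral.integral_nonneg ht fun s _ => energy_nonneg hβ
  nlinarith [h.energy_add_integral_energy_deriv ht]

theorem mul_integral_deriv_deriv_sq_le_energy (h : IsSolution A (2 * A / 3) (-(A / 3)) β ε u)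
    (hβ : 0 ≤ β) (hε : 0 ≤ ε) (ht : 0 ≤ t) :
    2 * β * ε * (∫ s in (0 : ℝ)..t, ∫ x, deriv (deriv (u s)) x ^ 2) ≤ energy β (u 0) := by
  have dissipation_le : β * (∫ s in (0 : ℝ)..t, ∫ x, deriv (deriv (u s)) x ^ 2) ≤
      ∫ s in (0 : ℝ)..t, energy β (deriv (u s)) := by
    rw [← intervalIntegral.integral_const_mul]
    exact intervalIntegral.integral_mono_on ht
      ((h.continuous_integral_deriv_deriv_sq.const_mul β).intervalIntegrable _ _)
      (h.continuous_energy_deriv.intervalIntegrable _ _) fun s _ =>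
        le_add_of_nonneg_left (integral_nonneg fun x => sq_nonneg _)
  nlinarith [h.energy_add_integral_energy_deriv ht, energy_nonneg (v := u t) hβ]

theorem sq_le_of_quarticEnergy_le (h : IsSolution A (2 * A / 3) (-(A / 3)) β ε u)
    (hβ : 0 ≤ β) (hε : 0 < ε) (ht : 0 ≤ t) {F : ℝ} (hF : quarticEnergy A ε (u t) ≤ F) (x : ℝ) :
    u t x ^ 2 ≤ (energy β (u 0) + F) / ε := by
  rw [le_div_iff₀' hε]
  linarith [mul_sq_le_energy_add_quarticEnergy (A := A) (ε := ε) hβ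
    ((h.contDiff_slice t).of_le (by norm_num)) (h.hasCompactSupport t) x, h.energy_le hβ hε.le ht]

theorem quarticEnergy_variation_le (h : IsSolution A (2 * A / 3) (-(A / 3)) β ε u)
    (hβ : 0 ≤ β) (hε : 0 < ε) (ht : 0 ≤ t) {F : ℝ} (hF : quarticEnergy A ε (u t) ≤ F)
    (hβF : β * (1 + 3 * A ^ 2 * ((energy β (u 0) + F) / ε)) ≤ ε ^ 2) :
    A ^ 2 / 6 * (4 * ∫ x, u t x ^ 3 * ksRHS A (2 * A / 3) (-(A / 3)) β ε (u t) x)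
        + ε ^ 2 * (-2 * ∫ x, deriv (deriv (u t)) x *
            ksRHS A (2 * A / 3) (-(A / 3)) β ε (u t) x) ≤
      -(ε ^ 3 / 2) * ∫ x, deriv (deriv (u t)) x ^ 2 := by
  refine KudryashovSinelshchikov.quarticEnergy_variation_le hβ hε (h.contDiff_slice t)
    (h.hasCompactSupport t) fun x => le_trans ?_ hβF
  gcongr
  exact h.sq_le_of_quarticEnergy_le hβ hε ht hF x

theorem quarticEnergy_lt (h : IsSolution A (2 * A / 3) (-(A / 3)) β ε u) (hβ : 0 ≤ β)
    (hε : 0 < ε) (ht : 0 ≤ t) {F : ℝ} (hF : quarticEnergy A ε (u 0) < F)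
    (hβF : β * (1 + 3 * A ^ 2 * ((energy β (u 0) + F) / ε)) ≤ ε ^ 2) :
    quarticEnergy A ε (u t) < F := by
  refine lt_of_deriv_right_nonpos_of_lt
    (fun s hs => (h.hasDerivAt_quarticEnergy hs.1).continuousAt.continuousWithinAt)
    (fun s hs => (h.hasDerivAt_quarticEnergy hs.1).hasDerivWithinAt) hF (fun s hs hsF => ?_)
    ⟨ht, le_rfl⟩
  refine (h.quarticEnergy_variation_le hβ hε hs.1 hsF.le hβF).trans ?_
  rw [neg_mul, neg_nonpos]
  positivity

theorem quarticEnergy_add_integral_le (h : IsSolution A (2 * A / 3) (-(A / 3)) β ε u) (hβ : 0 ≤ β)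
    (hε : 0 < ε) (ht : 0 ≤ t) {F : ℝ} (hF : quarticEnergy A ε (u 0) < F)
    (hβF : β * (1 + 3 * A ^ 2 * ((energy β (u 0) + F) / ε)) ≤ ε ^ 2) :
    quarticEnergy A ε (u t) + ε ^ 3 / 2 * (∫ s in (0 : ℝ)..t, ∫ x, deriv (deriv (u s)) x ^ 2) ≤
      quarticEnergy A ε (u 0) := by
  have ftc := intervalIntegral.sub_le_integral_of_hasDeriv_right_of_le ht
    (fun s hs => (h.hasDerivAt_quarticEnergy hs.1).continuousAt.continuousWithinAt)
    (fun s hs => (h.hasDerivAt_quarticEnergy hs.1.le).hasDerivWithinAt)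
    (h.continuous_integral_deriv_deriv_sq.const_mul (-(ε ^ 3 / 2))).integrableOn_Icc
    (fun s hs => h.quarticEnergy_variation_le hβ hε hs.1.le
      (h.quarticEnergy_lt hβ hε hs.1.le hF hβF).le hβF)
  rw [intervalIntegral.integral_const_mul] at ftc
  linarith

theorem mul_integral_sq_mul_deriv_deriv_le_energy
    (h : IsSolution A (2 * A / 3) (-(A / 3)) β ε u) (hβ : 0 < β) (hε : 0 ≤ ε) (ht : 0 ≤ t) :
    2 * ε * (β ^ 2 * ∫ s in (0 : ℝ)..t, ∫ x, (u s x * deriv (deriv (u s)) x) ^ 2) ≤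
      √β * energy β (u 0) ^ 2 := by
  have sqrt_pos : 0 < √β := Real.sqrt_pos.2 hβ
  have sqrt_sq : √β ^ 2 = β := Real.sq_sqrt hβ.le
  have sup_bound : ∀ s ∈ Set.Icc 0 t, ∀ x, u s x ^ 2 ≤ energy β (u 0) / √β := fun s hs x => by
    have := mul_sq_le_energy ((h.contDiff_slice s).of_le (by norm_num)) (h.hasCompactSupport s)
      √β x
    rw [sqrt_sq] at this
    rw [le_div_iff₀' sqrt_pos]
    exact this.trans (h.energy_le hβ.le hε hs.1)
  calc _ ≤ 2 * ε * (β ^ 2 * (energy β (u 0) / √β *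
          ∫ s in (0 : ℝ)..t, ∫ x, deriv (deriv (u s)) x ^ 2)) := by
        gcongr
        exact h.integral_sq_mul_deriv_deriv_le ht sup_bound
    _ = √β * energy β (u 0) *
          (2 * β * ε * ∫ s in (0 : ℝ)..t, ∫ x, deriv (deriv (u s)) x ^ 2) := by
        rw [← mul_left_inj' sqrt_pos.ne']
        field_simp
        rw [sqrt_sq]
        ring
    _ ≤ √β * energy β (u 0) * energy β (u 0) :=
        mul_le_mul_of_nonneg_left (h.mul_integral_deriv_deriv_sq_le_energy hβ.le hε ht)
          (mul_nonneg sqrt_pos.le (energy_nonneg hβ.le))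
    _ = √β * energy β (u 0) ^ 2 := by ring

theorem mul_integral_sq_mul_deriv_deriv_le_quarticEnergy
    (h : IsSolution A (2 * A / 3) (-(A / 3)) β ε u) (hβ : 0 ≤ β) (hε : 0 < ε) (ht : 0 ≤ t) {F : ℝ}
    (hF : quarticEnergy A ε (u 0) < F)
    (hβF : β * (1 + 3 * A ^ 2 * ((energy β (u 0) + F) / ε)) ≤ ε ^ 2) :
    ε ^ 4 * (∫ s in (0 : ℝ)..t, ∫ x, (u s x * deriv (deriv (u s)) x) ^ 2) ≤
      2 * F * (energy β (u 0) + F) := by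
  have hEF : 0 ≤ energy β (u 0) + F :=
    add_nonneg (energy_nonneg hβ) (quarticEnergy_nonneg.trans hF.le)
  have dissipation_le : ε ^ 3 * (∫ s in (0 : ℝ)..t, ∫ x, deriv (deriv (u s)) x ^ 2) ≤ 2 * F := by
    linarith [h.quarticEnergy_add_integral_le hβ hε ht hF hβF,
      quarticEnergy_nonneg (A := A) (ε := ε) (v := u t)]
  calc _ ≤ ε ^ 4 * ((energy β (u 0) + F) / ε *
          ∫ s in (0 : ℝ)..t, ∫ x, deriv (deriv (u s)) x ^ 2) := by
        gcongr
        exact h.integral_sq_mul_deriv_deriv_le ht fun s hs =>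
          h.sq_le_of_quarticEnergy_le hβ hε hs.1 (h.quarticEnergy_lt hβ hε hs.1 hF hβF).le
    _ = ε ^ 3 * (∫ s in (0 : ℝ)..t, ∫ x, deriv (deriv (u s)) x ^ 2) * (energy β (u 0) + F) := by
        field_simp
    _ ≤ 2 * F * (energy β (u 0) + F) := mul_le_mul_of_nonneg_right dissipation_le hEF

theorem integral_sq_mul_deriv_deriv_le_of_le (h : IsSolution A (2 * A / 3) (-(A / 3)) β ε u)
    (hβ : 0 < β) (ht : 0 ≤ t) {ε₀ c C₀ : ℝ} (hε₀ : 0 < ε₀) (hε : ε₀ ≤ ε)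
    (hE : energy β (u 0) ≤ C₀) (hβε : β ≤ c * ε ^ 4) :
    β ^ 2 * (∫ s in (0 : ℝ)..t, ∫ x, (u s x * deriv (deriv (u s)) x) ^ 2) ≤
      √c * C₀ ^ 2 / (2 * ε₀ ^ 2) * ε ^ 3 := by
  have ε_pos : 0 < ε := hε₀.trans_le hε
  have hE0 : 0 ≤ energy β (u 0) := energy_nonneg hβ.le
  have sqrt_le : √β ≤ √c * ε ^ 2 := by
    rw [← Real.sqrt_sq (sq_nonneg ε), ← Real.sqrt_mul' _ (by positivity)]
    exact Real.sqrt_le_sqrt (hβε.trans_eq (by ring))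
  refine le_of_mul_le_mul_left ?_ (by positivity : 0 < 2 * ε)
  calc _ ≤ √β * energy β (u 0) ^ 2 :=
        h.mul_integral_sq_mul_deriv_deriv_le_energy hβ ε_pos.le ht
    _ ≤ √c * ε ^ 2 * C₀ ^ 2 := by gcongr
    _ ≤ √c * ε ^ 2 * C₀ ^ 2 * (ε / ε₀) ^ 2 :=
        le_mul_of_one_le_right (by positivity) (one_le_pow₀ ((one_le_div₀ hε₀).2 hε))
    _ = 2 * ε * (√c * C₀ ^ 2 / (2 * ε₀ ^ 2) * ε ^ 3) := by field_simp

theorem integral_sq_mul_deriv_deriv_le_of_le_one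
    (h : IsSolution A (2 * A / 3) (-(A / 3)) β ε u) (hβ : 0 ≤ β) (hε : 0 < ε) (hε1 : ε ≤ 1)
    (ht : 0 ≤ t) {c C₀ F : ℝ} (hE : energy β (u 0) ≤ C₀) (hF : quarticEnergy A ε (u 0) < F)
    (hβε : β ≤ c * ε ^ 4) (hcε : c * (1 + 3 * A ^ 2 * (C₀ + F)) * ε ≤ 1) :
    β ^ 2 * (∫ s in (0 : ℝ)..t, ∫ x, (u s x * deriv (deriv (u s)) x) ^ 2) ≤
      2 * c ^ 2 * F * (C₀ + F) * ε ^ 3 := by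
  have hF0 : 0 < F := quarticEnergy_nonneg.trans_lt hF
  have hE0 : 0 ≤ energy β (u 0) := energy_nonneg hβ
  have hC₀ : 0 ≤ C₀ := hE0.trans hE
  have hcε4 : 0 ≤ c * ε ^ 4 := hβ.trans hβε
  have one_le_inv : 1 ≤ 1 / ε := (one_le_div₀ hε).2 hε1
  have hEF : 2 * F * (energy β (u 0) + F) ≤ 2 * F * (C₀ + F) := by gcongr
  have trapping : β * (1 + 3 * A ^ 2 * ((energy β (u 0) + F) / ε)) ≤ ε ^ 2 :=
    calc _ ≤ c * ε ^ 4 * (1 / ε + 3 * A ^ 2 * ((C₀ + F) / ε)) := by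
          gcongr
      _ = c * (1 + 3 * A ^ 2 * (C₀ + F)) * ε * ε ^ 2 := by field_simp
      _ ≤ ε ^ 2 := mul_le_of_le_one_left (sq_nonneg ε) hcε
  set I := ∫ s in (0 : ℝ)..t, ∫ x, (u s x * deriv (deriv (u s)) x) ^ 2
  have hI : 0 ≤ I := intervalIntegral.integral_nonneg ht fun s _ => by positivity
  have I_le : ε ^ 4 * I ≤ 2 * F * (C₀ + F) :=
    (h.mul_integral_sq_mul_deriv_deriv_le_quarticEnergy hβ hε ht hF trapping).trans hEF
  have ε_pow_le : ε ^ 4 ≤ ε ^ 3 := pow_le_pow_of_le_one hε.le hε1 (by norm_num)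
  calc β ^ 2 * I ≤ (c * ε ^ 4) ^ 2 * I := by gcongr
    _ = c ^ 2 * (ε ^ 4 * I) * ε ^ 4 := by ring
    _ ≤ c ^ 2 * (2 * F * (C₀ + F)) * ε ^ 3 := by gcongr
    _ = 2 * c ^ 2 * F * (C₀ + F) * ε ^ 3 := by ring

end IsSolution

end Solutions

end KudryashovSinelshchikov

open KudryashovSinelshchikov in
theorem stmt_12_general (A C₀ c : ℝ) (hC₀ : 0 < C₀) (hc : 0 < c) :
    ∃ M : ℝ, 0 < M ∧ ∀ (ε β : ℝ) (u : ℝ → ℝ → ℝ), 0 < ε → 0 < β →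
      IsSolution A (2 * A / 3) (-(A / 3)) β ε u →
      (∫ x, u 0 x ^ 2) + (∫ x, u 0 x ^ 4) + (β + ε ^ 2) * (∫ x, deriv (u 0) x ^ 2) ≤ C₀ →
      β ≤ c * ε ^ 4 → ∀ t, 0 ≤ t →
        β ^ 2 * (∫ s in (0 : ℝ)..t, ∫ x, (u s x * deriv (deriv (u s)) x) ^ 2) ≤ M * ε ^ 3 := by
  set F := (A ^ 2 / 6 + 2) * C₀
  set L := c * (1 + 3 * A ^ 2 * (C₀ + F))
  have hL : 0 < L := by positivity
  refine ⟨√c * C₀ ^ 2 / (2 * (1 + L)⁻¹ ^ 2) + 2 * c ^ 2 * F * (C₀ + F), by positivity,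
    fun ε β u hε hβ h hinit hβε t ht => ?_⟩
  have hE : energy β (u 0) ≤ C₀ := energy_le_integral_sq_add.trans hinit
  have hQ : quarticEnergy A ε (u 0) < F :=
    calc _ ≤ (A ^ 2 / 6 + 1) * C₀ := (quarticEnergy_le_mul_integral_sq_add hβ.le).trans (by gcongr)
      _ < F := mul_lt_mul_of_pos_right (by linarith) hC₀
  rw [add_mul]
  rcases le_or_gt (1 + L)⁻¹ ε with large | small
  · exact (h.integral_sq_mul_deriv_deriv_le_of_le hβ ht (by positivity) large hE hβε).trans
      (le_add_of_nonneg_right (by positivity))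
  · have hεL : (1 + L) * ε ≤ 1 := by
      rw [← le_inv_mul_iff₀ (by positivity), mul_one]
      exact small.le
    exact (h.integral_sq_mul_deriv_deriv_le_of_le_one hβ.le hε (by nlinarith) ht hE hQ hβε
      (by nlinarith)).trans (le_add_of_nonneg_left (by positivity))

/-- Estimate `β² ∫₀ᵗ ‖u ∂ₓ²u‖²_{L²} ds ≤ M ε³`. -/
theorem stmt_12 (A C₀ : ℝ) (hA : A ≠ 0) (hC₀pos : 0 < C₀) :
    ∃ M : ℝ, 0 < M ∧
      ∀ (ε β : ℝ) (u : ℝ → ℝ → ℝ),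
        0 < ε → 0 < β →
        ContDiff ℝ (⊤ : ℕ∞) (Function.uncurry u) →
        (∃ R > (0:ℝ), ∀ t x : ℝ, R ≤ |x| → u t x = 0) →
        (∀ t : ℝ, 0 ≤ t → ∀ x : ℝ,
          deriv (fun τ => u τ x) t
            + A * u t x * deriv (u t) x
            + β * deriv (deriv (deriv (u t))) x
            - (2 * A / 3) * β * deriv (fun y => u t y * deriv (deriv (u t)) y) x
            - (-(A / 3)) * β * deriv (u t) x * deriv (deriv (u t)) x
            - ε * deriv (deriv (u t)) x = 0) →
        ((∫ x : ℝ, (u 0 x) ^ 2) + (∫ x : ℝ, (u 0 x) ^ 4)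
            + (β + ε ^ 2) * (∫ x : ℝ, (deriv (u 0) x) ^ 2) ≤ C₀) →
        β ≤ ε ^ 4 / (Real.sqrt C₀ * A ^ 2) →
        ∀ t : ℝ, 0 ≤ t →
          β ^ 2 * (∫ s in (0:ℝ)..t, ∫ x : ℝ, (u s x * deriv (deriv (u s)) x) ^ 2) ≤ M * ε ^ 3 := by
  have hc : 0 < √C₀ * A ^ 2 := by positivity
  obtain ⟨M, hM, hbound⟩ := stmt_12_general A C₀ (√C₀ * A ^ 2)⁻¹ hC₀pos (inv_pos.2 hc)
  refine ⟨M, hM, fun ε β u hε hβ hu ⟨R, _, hR⟩ hpde hinit hβε =>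
    hbound ε β u hε hβ ⟨contDiff_infty.1 hu 3, ⟨Metric.closedBall 0 R, isCompact_closedBall 0 R,
      fun t x hx => hR t x ?_⟩, fun t ht x => ?_⟩ hinit (by rwa [← div_eq_inv_mul])⟩
  · simpa using (not_le.1 (mt mem_closedBall_zero_iff.2 hx)).le
  · simp only [KudryashovSinelshchikov.ksRHS]
    linarith [hpde t ht x]
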